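/- arXiv:1710.02802 — 3 statements merged into one kernel-verified Lean document; each statement's English description precedes it below -/
import Mathlib

section
/- Let K be a field of characteristic zero and let Q ∈ K[x,y] be written as Q = Q_r y^r + Q_{r-1}(x) y^{r-1} + ... + Q_1(x) y + Q_0(x) with r ≥ 1 and leading coefficient Q_r a nonzero constant of K. If the partial derivative Q_y divides Q_x in K[x,y], then there exists a(x) ∈ K[x] such that Q is a polynomial in y + a(x); more precisely one can take a(x) = Q_{r-1}(x)/(r Q_r). -/
open Polynomial

/-!
Call the coefficientwise `x`-derivative `D`. Since the leading coefficient in `y` is constant, `Q_x`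
has `y`-degree at most that of `Q_y`, so `Q_x = Q_y * b` with `b` free of `y`. Comparing the
coefficients of `y ^ (r - 1)` gives `b = da/dx`. By the chain rule
`D (Q (y - a)) = (Q_x - Q_y * b) (y - a) = 0`, so the coefficients of `Q (y - a)` are constants.
The argument makes sense over any differential ring in place of `(K[x], d/dx)`.
-/

open Differential nonZeroDivisors

section Semiring

variable {R : Type*} [Semiring R]

theorem coeff_derivative_natDegree_sub_one (p : R[X]) :
    (derivative p).coeff (p.natDegree - 1) = p.leadingCoeff * p.natDegree := by
  obtain h | h := Nat.eq_zero_or_pos p.natDegree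
  · simp [derivative_of_natDegree_zero h, h]
  · rw [coeff_derivative, ← Nat.cast_succ, Nat.succ_eq_add_one, Nat.sub_add_cancel h, leadingCoeff]

theorem natDegree_derivative_of_leadingCoeff_mul_ne_zero {p : R[X]}
    (h : p.leadingCoeff * p.natDegree ≠ 0) :
    (derivative p).natDegree = p.natDegree - 1 :=
  natDegree_eq_of_le_of_coeff_ne_zero (natDegree_derivative_le p)
    (coeff_derivative_natDegree_sub_one p ▸ h)

end Semiring

section CommRing

variable {R : Type*} [CommRing R]

theorem exists_eq_mul_C_of_dvd_of_natDegree_le {p q : R[X]} (hp : p.leadingCoeff ∈ R⁰)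
    (hdvd : p ∣ q) (hdeg : q.natDegree ≤ p.natDegree) : ∃ b, q = p * C b := by
  obtain ⟨h, rfl⟩ := hdvd
  obtain rfl | h_ne := eq_or_ne h 0
  · exact ⟨0, by rw [C_0]⟩
  have h_lead : p.leadingCoeff * h.leadingCoeff ≠ 0 := by
    rwa [Ne, mul_left_mem_nonZeroDivisors_eq_zero_iff hp, leadingCoeff_eq_zero]
  rw [natDegree_mul' h_lead] at hdeg
  exact ⟨h.coeff 0, by rw [← eq_C_of_natDegree_eq_zero (by lia)]⟩

theorem mul_natCast_mem_nonZeroDivisors [IsAddTorsionFree R] {c : R} (hc : c ∈ R⁰) {n : ℕ}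
    (hn : n ≠ 0) : c * n ∈ R⁰ := by
  refine mul_mem hc (mem_nonZeroDivisors_iff_right.mpr fun x hx => ?_)
  rwa [← nsmul_eq_mul', smul_eq_zero_iff_right hn] at hx

end CommRing

section DifferentialRing

variable {A : Type*} [CommRing A] [Differential A]

theorem mapCoeffs_eq_sum (p : A[X]) : mapCoeffs p = p.sum fun n c => C c′ * X ^ n := by
  conv_lhs => rw [p.as_sum_support]
  simp only [map_sum, mapCoeffs_monomial, sum_def, C_mul_X_pow_eq_monomial]

theorem mapCoeffs_comp (p q : A[X]) :
    mapCoeffs (p.comp q) = (mapCoeffs p).comp q + (derivative p).comp q * mapCoeffs q := by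
  let : Differential A[X] := ⟨mapCoeffs⟩
  have : DifferentialAlgebra A A[X] := ⟨mapCoeffs_C⟩
  exact deriv_aeval_eq q p

theorem natDegree_mapCoeffs_le {p : A[X]} (hlead : p.leadingCoeff′ = 0) :
    (mapCoeffs p).natDegree ≤ p.natDegree - 1 := by
  refine natDegree_le_iff_coeff_eq_zero.mpr fun n hn => ?_
  rw [coeff_mapCoeffs]
  obtain rfl | hlt := (Nat.le_of_pred_lt hn).eq_or_lt
  · exact hlead
  · rw [coeff_eq_zero_of_natDegree_lt hlt, map_zero]

theorem mapCoeffs_eq_derivative_mul_C {p : A[X]} {a : A} (hlead : p.leadingCoeff′ = 0)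
    (hreg : p.leadingCoeff * p.natDegree ∈ A⁰) (hdvd : derivative p ∣ mapCoeffs p)
    (ha : p.leadingCoeff * p.natDegree * a = p.coeff (p.natDegree - 1)) :
    mapCoeffs p = derivative p * C a′ := by
  obtain _ | _ := subsingleton_or_nontrivial A
  · exact Subsingleton.elim _ _
  have hdeg := natDegree_derivative_of_leadingCoeff_mul_ne_zero (nonZeroDivisors.ne_zero hreg)
  have hcoeff := coeff_derivative_natDegree_sub_one p
  obtain ⟨b, hb⟩ : ∃ b, mapCoeffs p = derivative p * C b :=
    exists_eq_mul_C_of_dvd_of_natDegree_le (by rwa [leadingCoeff, hdeg, hcoeff]) hdvd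
      (hdeg ▸ natDegree_mapCoeffs_le hlead)
  have hba : p.leadingCoeff * p.natDegree * b = p.leadingCoeff * p.natDegree * a′ :=
    calc
      p.leadingCoeff * p.natDegree * b = (mapCoeffs p).coeff (p.natDegree - 1) := by
        rw [hb, coeff_mul_C, hcoeff]
      _ = (p.leadingCoeff * p.natDegree * a)′ := by rw [coeff_mapCoeffs, ha]
      _ = p.leadingCoeff * p.natDegree * a′ := by simp [Derivation.leibniz, hlead]
  rw [hb, (mul_cancel_left_mem_nonZeroDivisors hreg).mp hba]

theorem mapCoeffs_taylor_neg_eq_zero {p : A[X]} {a : A}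
    (h : mapCoeffs p = derivative p * C a′) : mapCoeffs (taylor (-a) p) = 0 := by
  rw [taylor_apply, mapCoeffs_comp, h]
  simp

end DifferentialRing

section Bivariate

variable {R : Type*} [CommRing R]

/-- The differential ring `(R[X], d/dX)`, which turns `Differential.mapCoeffs` on `R[X][X]` into the
partial derivative with respect to the inner variable. -/
noncomputable local instance differentialPolynomial : Differential R[X] :=
  ⟨derivative'.restrictScalars ℤ⟩

theorem exists_map_C_eq_of_mapCoeffs_eq_zero [IsAddTorsionFree R] {P : R[X][X]}
    (hP : mapCoeffs P = 0) : ∃ g : R[X], g.map C = P := by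
  refine (mem_lifts P).mp ((lifts_iff_coeff_lifts P).mpr fun n => ⟨(P.coeff n).coeff 0, ?_⟩)
  have hder : derivative (P.coeff n) = 0 := congrArg (coeff · n) hP
  exact (eq_C_of_derivative_eq_zero hder).symm

theorem stmt_0_general [IsAddTorsionFree R] {Q : R[X][X]} {q : R} {a : R[X]}
    (hdeg : Q.natDegree ≠ 0) (hq : q ∈ R⁰) (hlead : Q.leadingCoeff = C q)
    (hdvd : derivative Q ∣ Q.sum fun n c => C (derivative c) * X ^ n)
    (ha : (Q.natDegree * q) • a = Q.coeff (Q.natDegree - 1)) :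
    ∃ g : R[X], Q = (g.map C).comp (X + C a) := by
  have hlead_deriv : Q.leadingCoeff′ = 0 := hlead ▸ derivative_C
  have hC : Q.leadingCoeff * Q.natDegree = C (q * Q.natDegree) := by
    rw [hlead, C_mul, C_eq_natCast]
  have hreg : Q.leadingCoeff * Q.natDegree ∈ R[X]⁰ := by
    rw [hC]
    apply mem_nonZeroDivisors_of_leadingCoeff
    rw [leadingCoeff_C]
    exact mul_natCast_mem_nonZeroDivisors hq hdeg
  have hcoeff : Q.leadingCoeff * Q.natDegree * a = Q.coeff (Q.natDegree - 1) := by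
    rw [hC, ← smul_eq_C_mul, mul_comm, ha]
  have hQ : mapCoeffs Q = derivative Q * C a′ :=
    mapCoeffs_eq_derivative_mul_C hlead_deriv hreg ((mapCoeffs_eq_sum Q).symm ▸ hdvd) hcoeff
  obtain ⟨g, hg⟩ := exists_map_C_eq_of_mapCoeffs_eq_zero (mapCoeffs_taylor_neg_eq_zero hQ)
  refine ⟨g, ?_⟩
  rw [hg, ← taylor_apply, taylor_taylor, add_neg_cancel, taylor_zero]

end Bivariate

/-- If `Q ∈ K[x][y]` has degree `r ≥ 1` in `y` with constant nonzero leading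
coefficient `qr`, and `Q_y ∣ Q_x`, then `Q` is a polynomial in `y + a(x)` with
`a(x) = Q_{r-1}(x)/(r·qr)`. Here `Q_x` is the coefficientwise `x`-derivative. -/
theorem stmt_0 (K : Type*) [Field K] [CharZero K]
    (Q : Polynomial (Polynomial K)) (r : ℕ) (qr : K)
    (hr : 1 ≤ r) (hdeg : Q.natDegree = r) (hqr : qr ≠ 0)
    (hlead : Q.leadingCoeff = Polynomial.C qr)
    (hdvd : (Polynomial.derivative Q) ∣
      Q.sum (fun n a => Polynomial.C (Polynomial.derivative a) * Polynomial.X ^ n)) :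
    ∃ g : Polynomial K,
      Q = (g.map (Polynomial.C : K →+* Polynomial K)).comp
        (Polynomial.X + Polynomial.C (((r : K) * qr)⁻¹ • Q.coeff (r - 1))) := by
  subst hdeg
  have hr0 : (Q.natDegree : K) ≠ 0 := Nat.cast_ne_zero.mpr (by lia)
  exact stmt_0_general (by lia) (mem_nonZeroDivisors_of_ne_zero hqr) hlead hdvd
    (smul_inv_smul₀ (mul_ne_zero hr0 hqr) _)
end

section
/- Let K be an algebraically closed field of characteristic zero. Let H = (u(x,y,z), v(x,y,u(x,y,z)), h(x,y)) be a polynomial map from K^3 to K^3 with H(0) = 0, where u ∈ K[x,y,z], v ∈ K[x,y,t] with deg_t v ≥ 2, and h ∈ K[x,y]. If the Jacobian matrix JH is nilpotent, then the three components of H are linearly dependent over K. -/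
open MvPolynomial

/-!
Suppose first that `u` does not involve `z`. Then `(u, v)` is a plane map with nilpotent Jacobian,
and the slope `a / b = u_x / u_y`, written in lowest terms, satisfies the inviscid Burgers equation.
Coprimality makes `a` and `b` affine, say `b = e x + b₀` and `a = a₀ - e y`. If `e ≠ 0`, the vector
field `b ∂_x - a ∂_y` annihilates `u`, but such an Euler field kills only constants. So `a` and `b`
are constants, and they are the coefficients of a constant combination of `u` and `v`.

Suppose now that `u` involves `z`, and view `u` and `v` as polynomials in their last variable over
`K[x, y]`. As `deg_t v ≥ 2`, comparing degrees in `u_x + (v(x, y, u))_y = 0` shows that the leading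
coefficient of `v` does not involve `y`, that `u_y` does not involve `z`, and hence that `u_x` is a
polynomial in `u`. If `h` were not constant, the vanishing of the sum of the principal `2 × 2`
minors would make `u_z` a quotient of polynomials in `u`, which forces `deg_z u = 1`. Then `u_x`,
`u_y` and `u_z` are free of `z`, and eliminating between the trace, minors and determinant
relations yields `h_x = h_y = 0` after all.
-/

open scoped Polynomial

namespace NilpotentJacobian

section PartialDerivatives

variable {σ R : Type*} [CommRing R]

theorem pderiv_comm (i j : σ) (p : MvPolynomial σ R) :
    pderiv i (pderiv j p) = pderiv j (pderiv i p) := by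
  classical
  have h : ⁅pderiv i, pderiv j⁆ = (0 : Derivation R (MvPolynomial σ R) (MvPolynomial σ R)) :=
    derivation_ext fun k => by
      rw [Derivation.commutator_apply, pderiv_X, pderiv_X, Pi.single_apply, Pi.single_apply]
      split_ifs <;> simp
  rw [← sub_eq_zero, ← Derivation.commutator_apply, h, Derivation.zero_apply]

theorem coeff_X_mul_pderiv (i : σ) (p : MvPolynomial σ R) (m : σ →₀ ℕ) :
    coeff m (X i * pderiv i p) = m i * coeff m p := by
  classical
  induction p using MvPolynomial.induction_on' with
  | monomial n a =>
    rw [X_mul_pderiv_monomial, coeff_smul, coeff_monomial, nsmul_eq_mul]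
    split_ifs with h <;> simp [h]
  | add p q hp hq => simp only [map_add, mul_add, coeff_add, hp, hq]

variable [IsDomain R] [CharZero R]

theorem pderiv_eq_zero_iff_degreeOf_eq_zero {i : σ} {p : MvPolynomial σ R} :
    pderiv i p = 0 ↔ p.degreeOf i = 0 := by
  constructor
  · intro h
    rw [← Nat.le_zero, degreeOf_le_iff]
    intro m hm
    have hcoeff : (m i : R) * coeff m p = 0 := by
      rw [← coeff_X_mul_pderiv, h, mul_zero, coeff_zero]
    have := (mul_eq_zero.1 hcoeff).resolve_right (mem_support_iff.1 hm)
    exact (Nat.cast_eq_zero.1 this).le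
  · classical
    intro h
    exact pderiv_eq_zero_of_notMem_vars (by simpa [degreeOf_def, vars_def] using h)

theorem degreeOf_pderiv_lt {i : σ} {p : MvPolynomial σ R} (h : pderiv i p ≠ 0) :
    (pderiv i p).degreeOf i < p.degreeOf i := by
  classical
  have hpos : p.degreeOf i ≠ 0 := mt pderiv_eq_zero_iff_degreeOf_eq_zero.2 h
  rw [degreeOf_lt_iff (Nat.pos_of_ne_zero hpos)]
  intro m hm
  rw [mem_support_iff, coeff_pderiv] at hm
  have := monomial_le_degreeOf i (mem_support_iff.2 (left_ne_zero_of_mul hm))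
  simpa using this

theorem pderiv_eq_zero_of_pderiv_mul_eq_zero {i : σ} {p q : MvPolynomial σ R} (hpq : p * q ≠ 0)
    (h : pderiv i (p * q) = 0) : pderiv i p = 0 := by
  rw [pderiv_eq_zero_iff_degreeOf_eq_zero] at h ⊢
  rw [degreeOf_mul_eq (left_ne_zero_of_mul hpq) (right_ne_zero_of_mul hpq)] at h
  exact Nat.eq_zero_of_add_eq_zero_right h

theorem pderiv_eq_zero_of_dvd_pderiv {i : σ} {p : MvPolynomial σ R} (h : p ∣ pderiv i p) :
    pderiv i p = 0 := by
  by_contra h0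
  obtain ⟨r, hr⟩ := h
  have hlt := degreeOf_pderiv_lt h0
  rw [hr] at h0
  rw [hr, degreeOf_mul_eq (left_ne_zero_of_mul h0) (right_ne_zero_of_mul h0)] at hlt
  exact absurd (Nat.le_add_right _ _) hlt.not_ge

theorem exists_eq_C_of_forall_pderiv_eq_zero {p : MvPolynomial σ R} (h : ∀ i, pderiv i p = 0) :
    ∃ c, p = C c := by
  classical
  refine ⟨_, vars_eq_empty_iff_eq_C.1 (Finset.eq_empty_of_forall_notMem fun i hi => ?_)⟩
  have hdeg := pderiv_eq_zero_iff_degreeOf_eq_zero.1 (h i)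
  rw [degreeOf_def, Multiset.count_eq_zero] at hdeg
  exact hdeg (by simpa [vars_def] using hi)

-- At a monomial of top degree `d`, the coefficient of the left-hand side is `e * d` times that
-- of `p`.
theorem totalDegree_eq_zero_of_sum_affine_mul_pderiv_eq_zero [Fintype σ] {p : MvPolynomial σ R}
    {e : R} (he : e ≠ 0) (a : σ → R) (h : ∑ i, (C e * X i + C (a i)) * pderiv i p = 0) :
    p.totalDegree = 0 := by
  classical
  rcases eq_or_ne p 0 with rfl | hp
  · exact totalDegree_zero
  obtain ⟨m, hm, hmd : p.totalDegree = m.degree⟩ :=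
    Finset.exists_mem_eq_sup p.support (support_nonempty.2 hp) (fun s => s.sum fun _ n => n)
  have hshift (i : σ) : coeff (m + Finsupp.single i 1) p = 0 := by
    refine coeff_eq_zero_of_totalDegree_lt ?_
    change p.totalDegree < (m + Finsupp.single i 1).degree
    rw [hmd, map_add, Finsupp.degree_single]
    exact Nat.lt_succ_self _
  have hterm (i : σ) :
      coeff m ((C e * X i + C (a i)) * pderiv i p) = e * coeff m p * (m i : R) := by
    rw [add_mul, mul_assoc, coeff_add, coeff_C_mul, coeff_C_mul, coeff_X_mul_pderiv, coeff_pderiv,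
      hshift]
    ring
  have hcoeff : e * coeff m p * (m.degree : R) = 0 := by
    simpa only [coeff_sum, hterm, ← Finset.mul_sum, coeff_zero, Finsupp.degree_eq_sum,
      Nat.cast_sum] using congrArg (coeff m) h
  rw [hmd]
  simpa [he, mem_support_iff.1 hm] using hcoeff

end PartialDerivatives

section PlaneJacobian

-- With denominators cleared, this is `f_x = f * f_y` for the slope `f = a / b = p_x / p_y`.
theorem inviscid_burgers {R A : Type*} [CommRing R] [CommRing A] [IsDomain A] [Algebra R A]
    {dx dy : Derivation R A A} (hcomm : ∀ a, dx (dy a) = dy (dx a)) {p q a b : A}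
    (hp : dy p ≠ 0) (htr : dx p + dy q = 0) (hbp : b * dx p = a * dy p)
    (hbq : b * dx q = -(a * dx p)) :
    b ^ 2 * dx a - a * b * (dx b + dy a) + a ^ 2 * dy b = 0 := by
  have hqy : dy q = -dx p := by linear_combination htr
  have hbp_x := congrArg dx hbp
  have hbq_y := congrArg dy hbq
  simp only [Derivation.leibniz, map_neg, smul_eq_mul] at hbp_x hbq_y
  rw [← hcomm q, hqy, map_neg, ← hcomm p] at hbq_y
  apply mul_left_cancel₀ hp
  linear_combination (-b ^ 2) * (hbq_y + hbp_x)
    + (b * dy b) * hbq + (-a * dy b + b * dx b + b * dy a) * hbp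

variable {K : Type*} [Field K] [CharZero K]

theorem exists_affine_of_inviscid_burgers {a b : MvPolynomial (Fin 2) K} (hb : b ≠ 0)
    (hab : IsRelPrime b a)
    (h : b ^ 2 * pderiv 0 a - a * b * (pderiv 0 b + pderiv 1 a) + a ^ 2 * pderiv 1 b = 0) :
    ∃ e a₀ b₀ : K, b = C e * X 0 + C b₀ ∧ a = C a₀ - C e * X 1 := by
  have hby : pderiv 1 b = 0 := by
    refine pderiv_eq_zero_of_dvd_pderiv ((hab.pow_right (n := 2)).dvd_of_dvd_mul_left ?_)
    exact ⟨a * (pderiv 0 b + pderiv 1 a) - b * pderiv 0 a, by linear_combination h⟩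
  have hax : pderiv 0 a = 0 := by
    refine pderiv_eq_zero_of_dvd_pderiv ((hab.symm.pow_right (n := 2)).dvd_of_dvd_mul_left ?_)
    exact ⟨b * (pderiv 0 b + pderiv 1 a) - a * pderiv 1 b, by linear_combination h⟩
  have hdiv : pderiv 0 b + pderiv 1 a = 0 := by
    rcases eq_or_ne a 0 with rfl | ha
    · rw [isRelPrime_zero_right] at hab
      rw [pderiv_eq_zero_of_dvd_pderiv hab.dvd, map_zero, add_zero]
    · refine (mul_eq_zero.1 ?_).resolve_left (mul_ne_zero ha hb)
      linear_combination b ^ 2 * hax + a ^ 2 * hby - h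
  obtain ⟨e, he⟩ : ∃ e, pderiv 0 b = C e := by
    refine exists_eq_C_of_forall_pderiv_eq_zero (Fin.forall_fin_two.2 ⟨?_, ?_⟩)
    · rw [eq_neg_of_add_eq_zero_left hdiv, map_neg, pderiv_comm, hax, map_zero, neg_zero]
    · rw [pderiv_comm, hby, map_zero]
  obtain ⟨b₀, hb₀⟩ : ∃ c, b - C e * X 0 = C c :=
    exists_eq_C_of_forall_pderiv_eq_zero (Fin.forall_fin_two.2 (by simp [he, hby, pderiv_X]))
  have hay : pderiv 1 a = -C e := by rw [← he]; exact eq_neg_of_add_eq_zero_right hdiv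
  obtain ⟨a₀, ha₀⟩ : ∃ c, a + C e * X 1 = C c :=
    exists_eq_C_of_forall_pderiv_eq_zero
      (Fin.forall_fin_two.2 (by simp [hax, hay, pderiv_X]))
  exact ⟨e, a₀, b₀, by linear_combination hb₀, by linear_combination ha₀⟩

theorem exists_combination_pderiv_eq_zero_of_field {P Q : MvPolynomial (Fin 2) K}
    (htr : pderiv 0 P + pderiv 1 Q = 0)
    (hdet : pderiv 0 P * pderiv 1 Q - pderiv 1 P * pderiv 0 Q = 0) :
    ∃ α β : K, (α ≠ 0 ∨ β ≠ 0) ∧ ∀ i, pderiv i (C α * P + C β * Q) = 0 := by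
  by_cases hPy : pderiv 1 P = 0
  · have hPx : pderiv 0 P = 0 := by
      rw [← sq_eq_zero_iff]
      linear_combination -hdet + pderiv 0 P * htr - pderiv 0 Q * hPy
    exact ⟨1, 0, Or.inl one_ne_zero, Fin.forall_fin_two.2 (by simp [hPx, hPy])⟩
  obtain ⟨b, a, g, hrel, hgb, hga⟩ :=
    UniqueFactorizationMonoid.exists_reduced_factors (pderiv 1 P) hPy (pderiv 0 P)
  have hg0 : g ≠ 0 := left_ne_zero_of_mul (hgb ▸ hPy)
  have hb0 : b ≠ 0 := right_ne_zero_of_mul (hgb ▸ hPy)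
  have hbP : b * pderiv 0 P = a * pderiv 1 P := by rw [← hgb, ← hga]; ring
  have hbQ : b * pderiv 0 Q = -(a * pderiv 0 P) := by
    apply mul_left_cancel₀ hg0
    linear_combination -hdet + pderiv 0 P * htr + pderiv 0 Q * hgb + pderiv 0 P * hga
  obtain ⟨e, a₀, b₀, hb, ha⟩ := exists_affine_of_inviscid_burgers hb0 hrel
    (inviscid_burgers (pderiv_comm 0 1) hPy htr hbP hbQ)
  rcases eq_or_ne e 0 with rfl | he
  · simp only [C_0, zero_mul, zero_add, sub_zero] at hb ha
    refine ⟨a₀, b₀, Or.inr ?_, Fin.forall_fin_two.2 ?_⟩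
    · rintro rfl
      exact hb0 (hb.trans C_0)
    · simp only [map_add, pderiv_C_mul]
      rw [← ha, ← hb]
      exact ⟨by linear_combination hbQ, by linear_combination b * htr - hbP⟩
  · have hvec : ∑ i, (C e * X i + C (![b₀, -a₀] i)) * pderiv i P = 0 := by
      simp only [Fin.sum_univ_two, Matrix.cons_val_zero, Matrix.cons_val_one, C_neg]
      linear_combination hbP - pderiv 0 P * hb + pderiv 1 P * ha
    refine absurd ?_ hPy
    rw [totalDegree_eq_zero_iff_eq_C.1
      (totalDegree_eq_zero_of_sum_affine_mul_pderiv_eq_zero he _ hvec), pderiv_C]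

theorem exists_combination_pderiv_eq_zero {R : Type*} [CommRing R] [IsDomain R] [CharZero R]
    {P Q : MvPolynomial (Fin 2) R} (htr : pderiv 0 P + pderiv 1 Q = 0)
    (hdet : pderiv 0 P * pderiv 1 Q - pderiv 1 P * pderiv 0 Q = 0) :
    ∃ α β : R, (α ≠ 0 ∨ β ≠ 0) ∧ ∀ i, pderiv i (C α * P + C β * Q) = 0 := by
  let φ := algebraMap R (FractionRing R)
  have hφ : Function.Injective φ := IsFractionRing.injective R (FractionRing R)
  have : CharZero (FractionRing R) := charZero_of_injective_algebraMap hφ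
  obtain ⟨α, β, hαβ, h⟩ := exists_combination_pderiv_eq_zero_of_field
    (P := map φ P) (Q := map φ Q) (by simpa [pderiv_map] using congrArg (map φ) htr)
    (by simpa [pderiv_map] using congrArg (map φ) hdet)
  obtain ⟨a, s, hs, rfl⟩ := IsFractionRing.div_surjective (A := R) α
  obtain ⟨b, t, ht, rfl⟩ := IsFractionRing.div_surjective (A := R) β
  have hφs : φ s ≠ 0 := (map_ne_zero_iff φ hφ).2 (nonZeroDivisors.ne_zero hs)
  have hφt : φ t ≠ 0 := (map_ne_zero_iff φ hφ).2 (nonZeroDivisors.ne_zero ht)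
  refine ⟨a * t, b * s, ?_, fun i => map_injective φ hφ ?_⟩
  · have hs0 := nonZeroDivisors.ne_zero hs
    have ht0 := nonZeroDivisors.ne_zero ht
    simpa [hs0, ht0, hφs, hφt, φ] using hαβ
  · rw [map_zero, ← pderiv_map]
    have hα : φ (a * t) = φ s * φ t * (φ a / φ s) := by rw [map_mul]; field_simp
    have hβ : φ (b * s) = φ s * φ t * (φ b / φ t) := by rw [map_mul]; field_simp
    have hclear : map φ (C (a * t) * P + C (b * s) * Q) =
        C (φ s * φ t) * (C (φ a / φ s) * map φ P + C (φ b / φ t) * map φ Q) := by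
      rw [map_add, map_mul (map φ), map_mul (map φ), map_C, map_C, hα, hβ]
      simp only [C_mul]
      ring
    rw [hclear, pderiv_C_mul, h i, mul_zero]

end PlaneJacobian

section CoefficientwiseDerivation

variable {R A : Type*} [CommRing R] [CommRing A] [Algebra R A]

/-- The extension of a derivation `d` of `A` to `A[X]` with `d X = 0`; on
`K[x, y][z]` it extends `∂/∂x` and `∂/∂y`. -/
noncomputable def coeffwise (d : Derivation R A A) : Derivation R A[X] A[X] :=
  PolynomialModule.equivPolynomialSelf.compDer d.mapCoeffs

variable (d : Derivation R A A)

theorem coeff_coeffwise (p : A[X]) (n : ℕ) : (coeffwise d p).coeff n = d (p.coeff n) := rfl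

theorem coeffwise_C (a : A) : coeffwise d (Polynomial.C a) = Polynomial.C (d a) := by
  ext n
  rw [coeff_coeffwise, Polynomial.coeff_C, Polynomial.coeff_C]
  split_ifs <;> simp

theorem coeffwise_X : coeffwise d Polynomial.X = 0 := by
  ext n
  rw [coeff_coeffwise, Polynomial.coeff_X]
  split_ifs <;> simp

theorem coeffwise_comp (p q : A[X]) :
    coeffwise d (p.comp q) =
      (coeffwise d p).comp q + (Polynomial.derivative p).comp q * coeffwise d q := by
  induction p using Polynomial.induction_on' with
  | add p r hp hr => simp only [Polynomial.add_comp, map_add, hp, hr]; ring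
  | monomial n a =>
    simp only [← Polynomial.C_mul_X_pow_eq_monomial, Polynomial.derivative_C_mul_X_pow,
      Polynomial.mul_comp, Polynomial.C_comp, Polynomial.X_pow_comp, Derivation.leibniz,
      Derivation.leibniz_pow, coeffwise_C, coeffwise_X, smul_eq_mul, nsmul_eq_mul, mul_zero,
      zero_add, map_mul, map_natCast, Polynomial.natCast_comp]
    ring

theorem natDegree_coeffwise_le (p : A[X]) : (coeffwise d p).natDegree ≤ p.natDegree :=
  Polynomial.natDegree_le_iff_coeff_eq_zero.2 fun n hn => by
    rw [coeff_coeffwise, Polynomial.coeff_eq_zero_of_natDegree_lt hn, map_zero]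

theorem natDegree_coeffwise_lt {p : A[X]} (hp : p.natDegree ≠ 0) (h : d p.leadingCoeff = 0) :
    (coeffwise d p).natDegree < p.natDegree := by
  refine (natDegree_coeffwise_le d p).lt_of_ne fun heq => ?_
  have hlead : (coeffwise d p).leadingCoeff = 0 := by
    rw [Polynomial.leadingCoeff, heq, coeff_coeffwise]
    exact h
  rw [← heq, Polynomial.leadingCoeff_eq_zero.1 hlead] at hp
  exact hp Polynomial.natDegree_zero

theorem comp_eq_zero_iff_of_natDegree_ne_zero [IsDomain A] {p u : A[X]} (hu : u.natDegree ≠ 0) :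
    p.comp u = 0 ↔ p = 0 := by
  refine Polynomial.comp_eq_zero_iff.trans (or_iff_left fun h => hu ?_)
  rw [h.2, Polynomial.natDegree_C]

theorem natDegree_eq_one_of_derivative_mul_comp_eq_comp [IsDomain A] [CharZero A] {u p r : A[X]}
    (hu : u.natDegree ≠ 0) (hp : p ≠ 0)
    (h : Polynomial.derivative u * p.comp u = r.comp u) : u.natDegree = 1 := by
  have hu' : Polynomial.derivative u ≠ 0 := mt Polynomial.derivative_eq_zero.1 hu
  have hpu : p.comp u ≠ 0 := mt (comp_eq_zero_iff_of_natDegree_ne_zero hu).1 hp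
  have hdeg := congrArg Polynomial.natDegree h
  rw [Polynomial.natDegree_mul hu' hpu, Polynomial.natDegree_comp,
    Polynomial.natDegree_comp] at hdeg
  have hdvd : u.natDegree ∣ (Polynomial.derivative u).natDegree :=
    (Nat.dvd_add_left (Dvd.intro_left _ rfl)).1 (hdeg ▸ Dvd.intro_left _ rfl)
  have hlt := Polynomial.natDegree_derivative_lt hu
  have h0 := Nat.eq_zero_of_dvd_of_lt hdvd hlt
  rw [Polynomial.natDegree_derivative] at h0
  omega

end CoefficientwiseDerivation

section NilpotentMatrix

variable {R : Type*} [CommRing R] [IsDomain R]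

theorem det_eq_zero_of_isNilpotent {n : Type*} [Fintype n] [DecidableEq n] [Nonempty n]
    {M : Matrix n n R} (h : IsNilpotent M) : M.det = 0 := by
  obtain ⟨k, hk⟩ := h
  have hdet : M.det ^ k = 0 := by rw [← Matrix.det_pow, hk, Matrix.det_zero]
  exact eq_zero_of_pow_eq_zero hdet

theorem sum_principal_minors_eq_zero_of_isNilpotent [CharZero R] {M : Matrix (Fin 3) (Fin 3) R}
    (h : IsNilpotent M) :
    (M 0 0 * M 1 1 - M 0 1 * M 1 0) + (M 0 0 * M 2 2 - M 0 2 * M 2 0)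
      + (M 1 1 * M 2 2 - M 1 2 * M 2 1) = 0 := by
  have htr := (Matrix.isNilpotent_trace_of_isNilpotent h).eq_zero
  have htr_sq := (Matrix.isNilpotent_trace_of_isNilpotent (h.pow_succ 1)).eq_zero
  simp only [pow_succ, pow_zero, one_mul, Matrix.trace_fin_three, Matrix.mul_apply,
    Fin.sum_univ_three] at htr htr_sq
  apply mul_left_cancel₀ (two_ne_zero (α := R))
  linear_combination (M 0 0 + M 1 1 + M 2 2) * htr - htr_sq

end NilpotentMatrix

section Jacobian

variable {R A : Type*} [CommRing R] [CommRing A] [Algebra R A]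

/-- The Jacobian matrix of `(u, w, h)`, where the partial derivatives in the first two variables are
the coefficientwise extensions of `dx` and `dy`, the third variable is the variable of `A[X]`, and
`h` does not depend on it. -/
noncomputable def jacobian (dx dy : Derivation R A A) (u w : A[X]) (h : A) :
    Matrix (Fin 3) (Fin 3) A[X] :=
  !![coeffwise dx u, coeffwise dy u, Polynomial.derivative u;
     coeffwise dx w, coeffwise dy w, Polynomial.derivative w;
     Polynomial.C (dx h), Polynomial.C (dy h), 0]

variable [IsDomain A]

theorem trace_relation_of_isNilpotent_jacobian {dx dy : Derivation R A A} {u w : A[X]} {h : A}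
    (hnil : IsNilpotent (jacobian dx dy u w h)) : coeffwise dx u + coeffwise dy w = 0 := by
  simpa [Matrix.trace_fin_three, jacobian] using
    (Matrix.isNilpotent_trace_of_isNilpotent hnil).eq_zero

theorem eq_zero_of_C_add_C_mul_eq_zero {a b : A} {p : A[X]} (hp : p.natDegree ≠ 0)
    (h : Polynomial.C a + Polynomial.C b * p = 0) : a = 0 ∧ b = 0 := by
  have hb : b = 0 := by
    by_contra hb
    refine hp ?_
    rw [← Polynomial.natDegree_C_mul hb, eq_neg_of_add_eq_zero_right h, ← Polynomial.C_neg,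
      Polynomial.natDegree_C]
  rw [hb, Polynomial.C_0, zero_mul, add_zero, Polynomial.C_eq_zero] at h
  exact ⟨h, hb⟩

-- Eliminating `p`, `r` and `s` gives `(a * β - b * α) ^ 2 = 0`.
theorem eq_zero_of_minors_and_det_relations {a b c α β : A} {p r s : A[X]} (hp : p.natDegree ≠ 0)
    (hc : c ≠ 0) (htr : Polynomial.C a + s + Polynomial.C b * p = 0)
    (hminors : Polynomial.C a * s - Polynomial.C b * r =
      Polynomial.C c * (Polynomial.C α + Polynomial.C β * p))
    (hdet : Polynomial.C β * r = Polynomial.C α * s) : α = 0 ∧ β = 0 := by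
  have hβ : β = 0 := by
    have helim : Polynomial.C ((a * β - b * α) * a + c * β * α)
        + Polynomial.C ((a * β - b * α) * b + c * β ^ 2) * p = 0 := by
      simp only [map_add, map_sub, map_mul, map_pow]
      linear_combination (Polynomial.C a * Polynomial.C β - Polynomial.C b * Polynomial.C α) * htr
        - Polynomial.C β * hminors - Polynomial.C b * hdet
    obtain ⟨ha, hb⟩ := eq_zero_of_C_add_C_mul_eq_zero hp helim
    have hD : a * β - b * α = 0 := sq_eq_zero_iff.1 (by linear_combination β * ha - α * hb)
    have hcβ : c * β ^ 2 = 0 := by linear_combination hb - b * hD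
    exact sq_eq_zero_iff.1 ((mul_eq_zero.1 hcβ).resolve_left hc)
  refine ⟨by_contra fun hα => ?_, hβ⟩
  have hs0 : s = 0 := by
    refine (mul_eq_zero.1 ?_).resolve_left (Polynomial.C_ne_zero.2 hα)
    rw [← hdet, hβ, Polynomial.C_0, zero_mul]
  obtain ⟨ha, hb⟩ := eq_zero_of_C_add_C_mul_eq_zero hp (by rw [← htr, hs0, add_zero])
  simp [ha, hb, hβ, hc, hα] at hminors

theorem natDegree_coeffwise_eq_zero_of_trace_relation [CharZero A] {dx dy : Derivation R A A}
    {u v : A[X]} (hu : u.natDegree ≠ 0)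
    (hv : 2 ≤ v.natDegree) (hlead : dy v.leadingCoeff = 0)
    (htr : coeffwise dx u + coeffwise dy (v.comp u) = 0) : (coeffwise dy u).natDegree = 0 := by
  rcases eq_or_ne (coeffwise dy u) 0 with h0 | h0
  · rw [h0, Polynomial.natDegree_zero]
  have hv' : (Polynomial.derivative v).comp u ≠ 0 := by
    rw [Ne, comp_eq_zero_iff_of_natDegree_ne_zero hu, Polynomial.derivative_eq_zero]
    omega
  have hprod : (Polynomial.derivative v).comp u * coeffwise dy u =
      -(coeffwise dx u + (coeffwise dy v).comp u) := by
    rw [coeffwise_comp] at htr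
    linear_combination htr
  have hvy : (coeffwise dy v).natDegree ≤ v.natDegree - 1 :=
    Nat.le_sub_one_of_lt (natDegree_coeffwise_lt dy (by omega) hlead)
  have hdeg : ((Polynomial.derivative v).comp u * coeffwise dy u).natDegree ≤
      (v.natDegree - 1) * u.natDegree := by
    rw [hprod, Polynomial.natDegree_neg]
    apply Polynomial.natDegree_add_le_of_degree_le
    · exact (natDegree_coeffwise_le dx u).trans (Nat.le_mul_of_pos_left _ (by omega))
    · rw [Polynomial.natDegree_comp]
      exact Nat.mul_le_mul_right _ hvy
  rw [Polynomial.natDegree_mul hv' h0, Polynomial.natDegree_comp,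
    Polynomial.natDegree_derivative] at hdeg
  omega

variable [CharZero A] {dx dy : Derivation R A A} {u v : A[X]} {h : A}

theorem minors_relation_of_isNilpotent_jacobian
    (hnil : IsNilpotent (jacobian dx dy u (v.comp u) h)) :
    coeffwise dx u * (coeffwise dy v).comp u - coeffwise dy u * (coeffwise dx v).comp u =
      Polynomial.derivative u *
        (Polynomial.C (dx h) + Polynomial.C (dy h) * Polynomial.derivative v).comp u := by
  have hminors := sum_principal_minors_eq_zero_of_isNilpotent hnil
  rw [Polynomial.add_comp, Polynomial.mul_comp, Polynomial.C_comp, Polynomial.C_comp]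
  simp only [jacobian, coeffwise_comp, Polynomial.derivative_comp, Matrix.of_apply,
    Matrix.cons_val', Matrix.cons_val_zero, Matrix.cons_val_fin_one, Matrix.cons_val_one,
    Matrix.cons_val, mul_zero, zero_sub] at hminors
  linear_combination hminors

theorem det_relation_of_isNilpotent_jacobian (hu : u.natDegree ≠ 0)
    (hnil : IsNilpotent (jacobian dx dy u (v.comp u) h)) :
    Polynomial.C (dy h) * coeffwise dx v = Polynomial.C (dx h) * coeffwise dy v := by
  have hdet := det_eq_zero_of_isNilpotent hnil
  rw [← sub_eq_zero, ← comp_eq_zero_iff_of_natDegree_ne_zero hu]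
  apply mul_left_cancel₀ (mt Polynomial.derivative_eq_zero.1 hu)
  rw [mul_zero, Polynomial.sub_comp, Polynomial.mul_comp, Polynomial.mul_comp, Polynomial.C_comp,
    Polynomial.C_comp]
  simp only [jacobian, coeffwise_comp, Polynomial.derivative_comp, Matrix.det_fin_three,
    Matrix.of_apply, Matrix.cons_val', Matrix.cons_val_zero, Matrix.cons_val_fin_one,
    Matrix.cons_val_one, Matrix.cons_val, mul_zero, zero_sub, sub_zero] at hdet
  linear_combination hdet

end Jacobian

section MvJacobian

variable {σ R : Type*} [CommRing R] [IsDomain R] [CharZero R] {i j : σ}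
  {u v : (MvPolynomial σ R)[X]}

theorem pderiv_leadingCoeff_eq_zero_of_trace_relation (hu : u.natDegree ≠ 0) (hv : 2 ≤ v.natDegree)
    (htr : coeffwise (pderiv i) u + coeffwise (pderiv j) (v.comp u) = 0) :
    pderiv j v.leadingCoeff = 0 := by
  have hvu : pderiv j (v.comp u).leadingCoeff = 0 := by
    have hlt : u.natDegree < (v.comp u).natDegree := by
      rw [Polynomial.natDegree_comp]
      exact lt_mul_of_one_lt_left (Nat.pos_of_ne_zero hu) hv
    have hcoeff := congrArg (Polynomial.coeff · (v.comp u).natDegree) htr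
    simpa [coeff_coeffwise, Polynomial.coeff_eq_zero_of_natDegree_lt hlt] using hcoeff
  rw [Polynomial.leadingCoeff_comp hu] at hvu
  refine pderiv_eq_zero_of_pderiv_mul_eq_zero (mul_ne_zero ?_ (pow_ne_zero _ ?_)) hvu
  · exact Polynomial.leadingCoeff_ne_zero.2 (by rintro rfl; simp at hv)
  · exact Polynomial.leadingCoeff_ne_zero.2 (by rintro rfl; simp at hu)

theorem pderiv_leadingCoeff_eq_zero_of_coeffwise_eq_comp {r : (MvPolynomial σ R)[X]}
    (hu : u.natDegree = 1) (h : coeffwise (pderiv i) u = r.comp u) :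
    pderiv i u.leadingCoeff = 0 := by
  refine pderiv_eq_zero_of_dvd_pderiv ⟨((Polynomial.derivative r).comp u).coeff 0, ?_⟩
  have hcoeff := congrArg (fun p => (Polynomial.derivative p).coeff 0) h
  simpa [Polynomial.coeff_derivative, Polynomial.derivative_comp, Polynomial.mul_coeff_zero,
    coeff_coeffwise, Polynomial.leadingCoeff, hu] using hcoeff

theorem exists_coeffwise_eq_of_isNilpotent_jacobian {h : MvPolynomial σ R} (hu : u.natDegree ≠ 0)
    (hv : 2 ≤ v.natDegree) (hnil : IsNilpotent (jacobian (pderiv i) (pderiv j) u (v.comp u) h)) :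
    ∃ b r, coeffwise (pderiv j) u = Polynomial.C b ∧ coeffwise (pderiv i) u = r.comp u ∧
      r + coeffwise (pderiv j) v + Polynomial.C b * Polynomial.derivative v = 0 := by
  have htr := trace_relation_of_isNilpotent_jacobian hnil
  have hdeg := natDegree_coeffwise_eq_zero_of_trace_relation hu hv
    (pderiv_leadingCoeff_eq_zero_of_trace_relation hu hv htr) htr
  obtain ⟨b, hb⟩ := Polynomial.natDegree_eq_zero.1 hdeg
  refine ⟨b, -(coeffwise (pderiv j) v + Polynomial.C b * Polynomial.derivative v), hb.symm, ?_,
    by ring⟩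
  rw [coeffwise_comp, ← hb] at htr
  rw [Polynomial.neg_comp, Polynomial.add_comp, Polynomial.mul_comp, Polynomial.C_comp]
  linear_combination htr

theorem pderiv_eq_zero_of_isNilpotent_jacobian {h : MvPolynomial σ R} (hu : u.natDegree ≠ 0)
    (hv : 2 ≤ v.natDegree) (hnil : IsNilpotent (jacobian (pderiv i) (pderiv j) u (v.comp u) h)) :
    pderiv i h = 0 ∧ pderiv j h = 0 := by
  have hv' : (Polynomial.derivative v).natDegree ≠ 0 := by
    rw [Polynomial.natDegree_derivative]
    omega
  obtain ⟨b, r, huy, hux, hr⟩ := exists_coeffwise_eq_of_isNilpotent_jacobian hu hv hnil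
  have hminors := minors_relation_of_isNilpotent_jacobian hnil
  by_contra hne
  have hdeg : u.natDegree = 1 := by
    refine natDegree_eq_one_of_derivative_mul_comp_eq_comp hu
      (mt (eq_zero_of_C_add_C_mul_eq_zero hv') hne)
      (r := r * coeffwise (pderiv j) v - Polynomial.C b * coeffwise (pderiv i) v) ?_
    rw [← hminors, hux, huy, Polynomial.sub_comp, Polynomial.mul_comp, Polynomial.mul_comp,
      Polynomial.C_comp]
  obtain ⟨a, ha⟩ : ∃ a, Polynomial.C a = coeffwise (pderiv i) u :=
    Polynomial.natDegree_eq_zero.1 (Nat.lt_one_iff.1 (hdeg ▸ natDegree_coeffwise_lt _ hu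
      (pderiv_leadingCoeff_eq_zero_of_coeffwise_eq_comp hdeg hux)))
  obtain ⟨c, hc⟩ : ∃ c, Polynomial.C c = Polynomial.derivative u :=
    Polynomial.natDegree_eq_zero.1 (by rw [Polynomial.natDegree_derivative, hdeg])
  have hc0 : c ≠ 0 := by
    rw [← Polynomial.C_ne_zero, hc]
    exact mt Polynomial.derivative_eq_zero.1 hu
  have hra : r = Polynomial.C a := by
    rw [← sub_eq_zero, ← comp_eq_zero_iff_of_natDegree_ne_zero hu, Polynomial.sub_comp, ← hux,
      Polynomial.C_comp, ha, sub_self]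
  refine hne (eq_zero_of_minors_and_det_relations hv' hc0 (hra ▸ hr) ?_
    (det_relation_of_isNilpotent_jacobian hu hnil))
  rw [← sub_eq_zero, ← comp_eq_zero_iff_of_natDegree_ne_zero hu]
  rw [← ha, huy, ← hc] at hminors
  simp only [Polynomial.sub_comp, Polynomial.mul_comp, Polynomial.C_comp]
  exact sub_eq_zero.2 hminors

end MvJacobian

section LastVariable

variable {R : Type*} [CommRing R] {n : ℕ}

/-- The isomorphism `R[x₀, …, xₙ] ≃ R[x₀, …, xₙ₋₁][xₙ]` that singles out the last variable. -/
noncomputable def lastVarEquiv (R : Type*) [CommRing R] (n : ℕ) :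
    MvPolynomial (Fin (n + 1)) R ≃ₐ[R] (MvPolynomial (Fin n) R)[X] :=
  (renameEquiv R finSuccEquivLast).trans (optionEquivLeft R (Fin n))

theorem lastVarEquiv_C (a : R) : lastVarEquiv R n (C a) = Polynomial.C (C a) := by
  simp [lastVarEquiv]

theorem lastVarEquiv_X_castSucc (k : Fin n) :
    lastVarEquiv R n (X k.castSucc) = Polynomial.C (X k) := by
  simp [lastVarEquiv]

theorem lastVarEquiv_X_last : lastVarEquiv R n (X (Fin.last n)) = Polynomial.X := by
  simp [lastVarEquiv]

theorem natDegree_lastVarEquiv (p : MvPolynomial (Fin (n + 1)) R) :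
    (lastVarEquiv R n p).natDegree = p.degreeOf (Fin.last n) := by
  rw [← degreeOf_rename_of_injective finSuccEquivLast.injective, finSuccEquivLast_last,
    ← natDegree_optionEquivLeft]
  rfl

theorem lastVarEquiv_pderiv_last (p : MvPolynomial (Fin (n + 1)) R) :
    lastVarEquiv R n (pderiv (Fin.last n) p) = Polynomial.derivative (lastVarEquiv R n p) := by
  induction p using MvPolynomial.induction_on with
  | C a => simp [lastVarEquiv_C]
  | add p q hp hq => simp only [map_add, hp, hq]
  | mul_X p k hp =>
    induction k using Fin.lastCases with
    | last =>
      simp only [Derivation.leibniz, pderiv_X_self, smul_eq_mul, map_add, map_mul, map_one, hp,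
        lastVarEquiv_X_last, Polynomial.derivative_mul, Polynomial.derivative_X]
      ring
    | cast k => simp [lastVarEquiv_X_castSucc, hp, pderiv_X, mul_comm]

theorem lastVarEquiv_pderiv_castSucc (k : Fin n) (p : MvPolynomial (Fin (n + 1)) R) :
    lastVarEquiv R n (pderiv k.castSucc p) = coeffwise (pderiv k) (lastVarEquiv R n p) := by
  induction p using MvPolynomial.induction_on with
  | C a => simp [lastVarEquiv_C, coeffwise_C]
  | add p q hp hq => simp only [map_add, hp, hq]
  | mul_X p l hp =>
    induction l using Fin.lastCases with
    | last => simp [lastVarEquiv_X_last, hp, coeffwise_X, pderiv_X]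
    | cast l =>
      simp [lastVarEquiv_X_castSucc, hp, pderiv_X, coeffwise_C, Pi.single_apply, apply_ite]

theorem lastVarEquiv_aeval_snoc (u p : MvPolynomial (Fin (n + 1)) R) :
    lastVarEquiv R n (aeval (Fin.snoc (fun k : Fin n => X k.castSucc) u) p) =
      (lastVarEquiv R n p).comp (lastVarEquiv R n u) := by
  induction p using MvPolynomial.induction_on with
  | C a => simp [lastVarEquiv_C, algebraMap_eq]
  | add p q hp hq => simp only [map_add, hp, hq, Polynomial.add_comp]
  | mul_X p l hp =>
    rw [map_mul, map_mul, hp, map_mul, Polynomial.mul_comp, aeval_X]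
    induction l using Fin.lastCases with
    | last => simp [lastVarEquiv_X_last]
    | cast l => simp [lastVarEquiv_X_castSucc]

theorem lastVarEquiv_aeval_vec (u p : MvPolynomial (Fin 3) R) :
    lastVarEquiv R 2 (aeval ![X 0, X 1, u] p) = (lastVarEquiv R 2 p).comp (lastVarEquiv R 2 u) := by
  have hvec : ![X 0, X 1, u] = Fin.snoc (fun k : Fin 2 => X k.castSucc) u := by
    funext i
    fin_cases i <;> rfl
  rw [hvec, lastVarEquiv_aeval_snoc]

theorem exists_lastVarEquiv_eq_C_of_pderiv_last_eq_zero [IsDomain R] [CharZero R]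
    {p : MvPolynomial (Fin (n + 1)) R} (hp : pderiv (Fin.last n) p = 0) :
    ∃ q, lastVarEquiv R n p = Polynomial.C q := by
  have hdeg := pderiv_eq_zero_iff_degreeOf_eq_zero.1 hp
  rw [← natDegree_lastVarEquiv, Polynomial.natDegree_eq_zero] at hdeg
  exact hdeg.imp fun _ => Eq.symm

theorem map_lastVarEquiv_jacobian {u w h : MvPolynomial (Fin 3) R} {k : MvPolynomial (Fin 2) R}
    (hk : lastVarEquiv R 2 h = Polynomial.C k) :
    (lastVarEquiv R 2).mapMatrix (Matrix.of fun i j => pderiv j (![u, w, h] i)) =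
      jacobian (pderiv 0) (pderiv 1) (lastVarEquiv R 2 u) (lastVarEquiv R 2 w) k := by
  have hx (p : MvPolynomial (Fin 3) R) : lastVarEquiv R 2 (pderiv 0 p) =
    coeffwise (pderiv 0) (lastVarEquiv R 2 p) := lastVarEquiv_pderiv_castSucc 0 p
  have hy (p : MvPolynomial (Fin 3) R) : lastVarEquiv R 2 (pderiv 1 p) =
    coeffwise (pderiv 1) (lastVarEquiv R 2 p) := lastVarEquiv_pderiv_castSucc 1 p
  have hz (p : MvPolynomial (Fin 3) R) : lastVarEquiv R 2 (pderiv 2 p) =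
    Polynomial.derivative (lastVarEquiv R 2 p) := lastVarEquiv_pderiv_last p
  ext1 i j
  fin_cases i <;> fin_cases j <;>
    simp [jacobian, hx, hy, hz, hk, coeffwise_C, -EmbeddingLike.map_eq_zero_iff]

end LastVariable

section Dependence

variable {R : Type*} [CommRing R] [IsDomain R] [CharZero R]

theorem exists_combination_eq_C_of_isNilpotent_jacobian_C {P Q h : MvPolynomial (Fin 2) R}
    (hnil : IsNilpotent (jacobian (pderiv 0) (pderiv 1) (Polynomial.C P) (Polynomial.C Q) h)) :
    ∃ α β c : R, (α ≠ 0 ∨ β ≠ 0) ∧ C α * P + C β * Q = C c := by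
  have htr := trace_relation_of_isNilpotent_jacobian hnil
  have hminors := sum_principal_minors_eq_zero_of_isNilpotent hnil
  rw [coeffwise_C, coeffwise_C, ← map_add, Polynomial.C_eq_zero] at htr
  simp only [jacobian, coeffwise_C, Polynomial.derivative_C, Matrix.of_apply, Matrix.cons_val',
    Matrix.cons_val_zero, Matrix.cons_val_fin_one, Matrix.cons_val_one, Matrix.cons_val, mul_zero,
    zero_mul, sub_self, add_zero] at hminors
  rw [← map_mul, ← map_mul, ← map_sub, Polynomial.C_eq_zero] at hminors
  obtain ⟨α, β, hαβ, hder⟩ := exists_combination_pderiv_eq_zero htr hminors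
  obtain ⟨c, hc⟩ := exists_eq_C_of_forall_pderiv_eq_zero hder
  exact ⟨α, β, c, hαβ, hc⟩

theorem exists_combination_eq_C_of_isNilpotent_jacobian {u v : (MvPolynomial (Fin 2) R)[X]}
    {h : MvPolynomial (Fin 2) R} (hv : 2 ≤ v.natDegree)
    (hnil : IsNilpotent (jacobian (pderiv 0) (pderiv 1) u (v.comp u) h)) :
    ∃ l : Fin 3 → R, l ≠ 0 ∧ ∃ c, Polynomial.C (C (l 0)) * u + Polynomial.C (C (l 1)) * v.comp u
      + Polynomial.C (C (l 2)) * Polynomial.C h = Polynomial.C (C c) := by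
  by_cases hu : u.natDegree = 0
  · obtain ⟨P, rfl⟩ := Polynomial.natDegree_eq_zero.1 hu
    rw [Polynomial.comp_C] at hnil ⊢
    obtain ⟨α, β, c, hαβ, hc⟩ := exists_combination_eq_C_of_isNilpotent_jacobian_C hnil
    refine ⟨![α, β, 0], ?_, c, ?_⟩
    · intro hl
      have hα : α = 0 := congrFun hl 0
      have hβ : β = 0 := congrFun hl 1
      exact hαβ.elim (absurd hα) (absurd hβ)
    · rw [← hc]
      simp
  · obtain ⟨hx, hy⟩ := pderiv_eq_zero_of_isNilpotent_jacobian hu hv hnil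
    obtain ⟨c, rfl⟩ := exists_eq_C_of_forall_pderiv_eq_zero (Fin.forall_fin_two.2 ⟨hx, hy⟩)
    exact ⟨Pi.single 2 1, by simp, c, by simp⟩

end Dependence

end NilpotentJacobian

open NilpotentJacobian in
theorem stmt_12_general (K : Type*) [CommRing K] [IsDomain K] [CharZero K]
    (u v h : MvPolynomial (Fin 3) K)
    (hh : pderiv (2 : Fin 3) h = 0)
    (hdegv : 2 ≤ MvPolynomial.degreeOf (2 : Fin 3) v)
    (H : Fin 3 → MvPolynomial (Fin 3) K)
    (hH : H = ![u, MvPolynomial.aeval ![MvPolynomial.X 0, MvPolynomial.X 1, u] v, h])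
    (hH0 : ∀ i, MvPolynomial.constantCoeff (H i) = 0)
    (hnil : IsNilpotent (Matrix.of fun i j : Fin 3 => pderiv j (H i))) :
    ∃ l : Fin 3 → K, l ≠ 0 ∧
      MvPolynomial.C (l 0) * H 0 + MvPolynomial.C (l 1) * H 1 + MvPolynomial.C (l 2) * H 2
        = 0 := by
  subst hH
  obtain ⟨k, hk⟩ := exists_lastVarEquiv_eq_C_of_pderiv_last_eq_zero hh
  have hv : 2 ≤ (lastVarEquiv K 2 v).natDegree := (natDegree_lastVarEquiv v).symm ▸ hdegv
  have hnil' := hnil.map (lastVarEquiv K 2).mapMatrix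
  rw [map_lastVarEquiv_jacobian hk, lastVarEquiv_aeval_vec] at hnil'
  obtain ⟨l, hl, c, hc⟩ := exists_combination_eq_C_of_isNilpotent_jacobian hv hnil'
  have hcomb : C (l 0) * u + C (l 1) * aeval ![X 0, X 1, u] v + C (l 2) * h = C c := by
    apply (lastVarEquiv K 2).injective
    simpa only [map_add, map_mul, lastVarEquiv_C, lastVarEquiv_aeval_vec, hk] using hc
  have hc0 : c = 0 := by
    have h0 : constantCoeff u = 0 := hH0 0
    have h1 : constantCoeff (aeval ![X 0, X 1, u] v) = 0 := hH0 1
    have h2 : constantCoeff h = 0 := hH0 2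
    have hconst := congrArg constantCoeff hcomb
    simp only [map_add, map_mul, h0, h1, h2, mul_zero, add_zero, constantCoeff_C] at hconst
    exact hconst.symm
  exact ⟨l, hl, hcomb.trans (by rw [hc0, C_0])⟩

/-- Theorem 3.2: For `H = (u(x,y,z), v(x,y,u), h(x,y))` with `H(0) = 0`,
`deg_t v ≥ 2` (degree of the third variable of `v`), `h` independent of `z`, and `JH`
nilpotent, the components of `H` are linearly dependent over `K`. -/
theorem stmt_12 (K : Type*) [Field K] [IsAlgClosed K] [CharZero K]
    (u v h : MvPolynomial (Fin 3) K)
    (hh : pderiv (2 : Fin 3) h = 0)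
    (hdegv : 2 ≤ MvPolynomial.degreeOf (2 : Fin 3) v)
    (H : Fin 3 → MvPolynomial (Fin 3) K)
    (hH : H = ![u, MvPolynomial.aeval ![MvPolynomial.X 0, MvPolynomial.X 1, u] v, h])
    (hH0 : ∀ i, MvPolynomial.constantCoeff (H i) = 0)
    (hnil : IsNilpotent (Matrix.of fun i j : Fin 3 => pderiv j (H i))) :
    ∃ l : Fin 3 → K, l ≠ 0 ∧
      MvPolynomial.C (l 0) * H 0 + MvPolynomial.C (l 1) * H 1 + MvPolynomial.C (l 2) * H 2
        = 0 :=
  stmt_12_general K u v h hh hdegv H hH hH0 hnil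
end

section
/- Let K be an algebraically closed field of characteristic zero. Let H = (u(x,y,z), v(x,y,z), h(x,y)) be a polynomial map from K^3 to K^3 with H(0) = 0, where deg_z v = 1 and deg_z u ≥ 2. If the Jacobian matrix JH is nilpotent, then u, v, h are linearly dependent over K. -/
open MvPolynomial

open scoped Polynomial

/-!
In fact `h = 0`. Regard everything as polynomials in `z`, and let `p = h_x`, `q = h_y`, which do
not involve `z`, and `e = v_z`, the leading coefficient of `v`. With `B = v_y e + u_z v_x` and
`E = e² p - B v_x`, nilpotency of `JH` gives `p B² = -(u_z p + e q) E` and `E ∣ p³ e⁴`.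

If `p ≠ 0`, then `E` is free of `z`, so `B` is not, so `v_x = 0`; comparing degrees in `z` then
forces `deg_z u = 3`. If `p = 0 ≠ q`, then `B = 0` and `v_x ≠ 0`, which forces `deg_z u = 2`.
In either case the leading coefficient `f` of `u` satisfies `f_y e = k f e_y` with `k = deg_z u`,
hence `deg_y f = k deg_y e`. But `e_y²` in the first case, and `e_y e` in the second, is a nonzero
multiple of `f`; as `e_y ≠ 0` lowers the degree of `e` in `y`, its degree in `y` is too small.
-/

section SplitVar

variable {σ A : Type*} [DecidableEq σ] [CommSemiring A]

/-- A polynomial in the variables `σ`, viewed as a univariate polynomial in `X i` whose coefficients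
are polynomials in the other variables. -/
noncomputable def splitVar (i : σ) : MvPolynomial σ A ≃ₐ[A] (MvPolynomial {j // j ≠ i} A)[X] :=
  (renameEquiv A (Equiv.optionSubtypeNe i).symm).trans (optionEquivLeft A {j // j ≠ i})

@[simp]
lemma splitVar_C (i : σ) (a : A) : splitVar i (C a) = Polynomial.C (C a) := by
  simp [splitVar]

@[simp]
lemma splitVar_X_self (i : σ) : splitVar i (X i : MvPolynomial σ A) = Polynomial.X := by
  simp [splitVar]

@[simp]
lemma splitVar_X_of_ne {i j : σ} (hj : j ≠ i) :
    splitVar i (X j : MvPolynomial σ A) = Polynomial.C (X ⟨j, hj⟩) := by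
  simp [splitVar, hj]

lemma natDegree_splitVar (i : σ) (p : MvPolynomial σ A) :
    (splitVar i p).natDegree = degreeOf i p :=
  (degreeOf_eq_natDegree i p).symm

lemma splitVar_pderiv_self (i : σ) (p : MvPolynomial σ A) :
    splitVar i (pderiv i p) = Polynomial.derivative (splitVar i p) := by
  induction p using MvPolynomial.induction_on with
  | C a => simp
  | add p q hp hq => simp [hp, hq]
  | mul_X p j hp =>
    rcases eq_or_ne j i with rfl | hj
    · simp [hp, Derivation.leibniz, mul_comm]
    · simp [hp, hj, Derivation.leibniz, pderiv_X_of_ne hj, mul_comm]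

end SplitVar

section Coeffwise

variable {A R : Type*} [CommRing A] [CommRing R] [Algebra A R]

/-- The extension of a derivation `D` of `R` to `R[X]` which acts on coefficients and kills `X`.
For `D = ∂/∂y` it is the partial derivative in `y` of polynomials split along another variable. -/
noncomputable def coeffwise (D : Derivation A R R) : Derivation A R[X] R[X] :=
  PolynomialModule.equivPolynomialSelf.compDer D.mapCoeffs

variable (D : Derivation A R R)

@[simp]
lemma coeff_coeffwise (p : R[X]) (n : ℕ) : (coeffwise D p).coeff n = D (p.coeff n) := rfl

@[simp]
lemma coeffwise_C (r : R) : coeffwise D (Polynomial.C r) = Polynomial.C (D r) := by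
  ext n
  simp [Polynomial.coeff_C, apply_ite D]

@[simp]
lemma coeffwise_X : coeffwise D Polynomial.X = 0 := by
  ext n
  simp [Polynomial.coeff_X, apply_ite D]

lemma natDegree_coeffwise_le (p : R[X]) : (coeffwise D p).natDegree ≤ p.natDegree :=
  Polynomial.natDegree_le_iff_coeff_eq_zero.2 fun n hn => by
    rw [coeff_coeffwise, Polynomial.coeff_eq_zero_of_natDegree_lt hn, map_zero]

lemma splitVar_pderiv_of_ne {σ : Type*} [DecidableEq σ] {i j : σ} (hj : j ≠ i)
    (p : MvPolynomial σ A) :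
    splitVar i (pderiv j p) = coeffwise (pderiv ⟨j, hj⟩) (splitVar i p) := by
  induction p using MvPolynomial.induction_on with
  | C a => simp
  | add p q hp hq => simp [hp, hq]
  | mul_X p k hp =>
    rcases eq_or_ne k i with rfl | hk
    · simp [hp, Derivation.leibniz, pderiv_X_of_ne hj.symm]
    · simp [hp, Derivation.leibniz, pderiv_X, Pi.single_apply, hk, apply_ite (splitVar i)]

end Coeffwise

section Degree

lemma eq_C_of_forall_pderiv_eq_zero {σ A : Type*} [CommSemiring A] [NoZeroDivisors A] [CharZero A]
    {p : MvPolynomial σ A} (h : ∀ i, pderiv i p = 0) :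
    p = C (constantCoeff p) := by
  classical
  ext m
  rcases eq_or_ne m 0 with rfl | hm
  · simp [constantCoeff_eq]
  obtain ⟨i, hi⟩ := Finsupp.ne_iff.1 hm
  have hsplit : m - Finsupp.single i 1 + Finsupp.single i 1 = m :=
    tsub_add_cancel_of_le (Finsupp.single_le_iff.2 (Nat.one_le_iff_ne_zero.2 hi))
  have hcoeff := coeff_pderiv (i := i) p (m - Finsupp.single i 1)
  rw [h, coeff_zero, hsplit, eq_comm, mul_eq_zero] at hcoeff
  rw [coeff_C, if_neg hm.symm]
  exact hcoeff.resolve_right (Nat.cast_add_one_ne_zero _)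

lemma natDegree_eq_mul_of_derivative_mul_eq {S : Type*} [CommRing S] [IsDomain S] [CharZero S]
    {k : ℕ} {p q : S[X]} (hp : p ≠ 0) (hq : q ≠ 0)
    (h : Polynomial.derivative p * q = k * p * Polynomial.derivative q) :
    p.natDegree = k * q.natDegree := by
  have hlead := congrArg Polynomial.leadingCoeff h
  simp only [Polynomial.leadingCoeff_mul, Polynomial.leadingCoeff_derivative,
    ← Polynomial.C_eq_natCast, Polynomial.leadingCoeff_C] at hlead
  have hpq : p.leadingCoeff * q.leadingCoeff ≠ 0 := by simp [hp, hq]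
  have hcast : (p.natDegree : S) = k * q.natDegree :=
    mul_right_cancel₀ hpq (by linear_combination hlead)
  exact_mod_cast hcast

variable {σ A : Type*} [CommRing A] [IsDomain A] [CharZero A] {i : σ}

lemma degreeOf_pderiv (p : MvPolynomial σ A) : degreeOf i (pderiv i p) = degreeOf i p - 1 := by
  classical
  rw [← natDegree_splitVar, splitVar_pderiv_self, Polynomial.natDegree_derivative,
    natDegree_splitVar]

lemma pderiv_eq_zero_iff_degreeOf {p : MvPolynomial σ A} : pderiv i p = 0 ↔ degreeOf i p = 0 := by
  classical
  rw [← natDegree_splitVar, ← Polynomial.derivative_eq_zero, ← splitVar_pderiv_self,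
    map_eq_zero_iff _ (splitVar i).injective]

lemma degreeOf_eq_mul_of_pderiv_mul_eq {k : ℕ} {p q : MvPolynomial σ A} (hp : p ≠ 0) (hq : q ≠ 0)
    (h : pderiv i p * q = k * p * pderiv i q) : degreeOf i p = k * degreeOf i q := by
  classical
  rw [← natDegree_splitVar, ← natDegree_splitVar]
  refine natDegree_eq_mul_of_derivative_mul_eq (by simpa using hp) (by simpa using hq) ?_
  simpa [splitVar_pderiv_self] using congrArg (splitVar i) h

lemma pderiv_eq_zero_of_dvd_pderiv_mul {k : ℕ} (hk : 2 ≤ k) {p q r : MvPolynomial σ A}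
    (hp : p ≠ 0) (hq : q ≠ 0) (hr : r ≠ 0) (h : pderiv i p * q = k * p * pderiv i q)
    (hdvd : p ∣ pderiv i q * r) (hdeg : degreeOf i r ≤ degreeOf i q) :
    pderiv i q = 0 := by
  by_contra hdq
  obtain ⟨s, hs⟩ := hdvd
  have hs0 : p * s ≠ 0 := hs ▸ mul_ne_zero hdq hr
  have hd := congrArg (degreeOf i) hs
  rw [degreeOf_mul_eq hdq hr, degreeOf_mul_eq hp (right_ne_zero_of_mul hs0), degreeOf_pderiv,
    degreeOf_eq_mul_of_pderiv_mul_eq hp hq h] at hd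
  have := Nat.mul_le_mul_right (degreeOf i q) hk
  have : degreeOf i q ≠ 0 := mt pderiv_eq_zero_iff_degreeOf.2 hdq
  lia

end Degree

section Matrix

variable {T : Type*} [CommRing T]

lemma det_eq_zero_of_isNilpotent [IsReduced T] {n : Type*} [Fintype n] [DecidableEq n]
    [Nonempty n] {M : Matrix n n T} (hM : IsNilpotent M) : M.det = 0 := by
  obtain ⟨k, hk⟩ := hM
  refine eq_zero_of_pow_eq_zero (n := k) ?_
  rw [← Matrix.det_pow, hk, Matrix.det_zero]

lemma sum_principal_minors_eq_zero_of_isNilpotent [NoZeroDivisors T] [NeZero (2 : T)]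
    {M : Matrix (Fin 3) (Fin 3) T} (hM : IsNilpotent M) :
    (M 0 0 * M 1 1 - M 0 1 * M 1 0) + (M 0 0 * M 2 2 - M 0 2 * M 2 0)
      + (M 1 1 * M 2 2 - M 1 2 * M 2 1) = 0 := by
  have htr := (Matrix.isNilpotent_trace_of_isNilpotent hM).eq_zero
  have htr_sq := (Matrix.isNilpotent_trace_of_isNilpotent (hM.pow_succ 1)).eq_zero
  simp only [Matrix.trace_fin_three, pow_two, Matrix.mul_apply, Fin.sum_univ_three] at htr htr_sq
  refine (mul_eq_zero.1 ?_).resolve_left (two_ne_zero (α := T))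
  linear_combination (M 0 0 + M 1 1 + M 2 2) * htr - htr_sq

variable {a b c d e f p q : T}

lemma minors_relations_of_isNilpotent [NoZeroDivisors T] [NeZero (2 : T)]
    (hM : IsNilpotent !![a, b, c; d, f, e; p, q, 0]) :
    f ^ 2 + b * d + c * p + e * q = 0 ∧ p * (b * e - c * f) + q * (f * e + c * d) = 0 := by
  have htrace := (Matrix.isNilpotent_trace_of_isNilpotent hM).eq_zero
  have hminors := sum_principal_minors_eq_zero_of_isNilpotent hM
  have hdet := det_eq_zero_of_isNilpotent hM
  simp only [Matrix.trace_fin_three, Matrix.det_fin_three, Matrix.of_apply, Matrix.cons_val',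
    Matrix.cons_val_zero, Matrix.cons_val_fin_one, Matrix.cons_val_one, Matrix.cons_val, mul_zero,
    add_zero] at htrace hminors hdet
  constructor
  · linear_combination f * htrace - hminors
  · linear_combination hdet + q * e * htrace

lemma mul_sq_minor_eq (hminors : f ^ 2 + b * d + c * p + e * q = 0)
    (hdet : p * (b * e - c * f) + q * (f * e + c * d) = 0) :
    p * (f * e + c * d) ^ 2 = -((c * p + e * q) * (e ^ 2 * p - (f * e + c * d) * d)) := by
  linear_combination e ^ 2 * p * hminors - d * e * hdet

-- Modulo `e² p - B d` with `B = f e + c d` we have `e² p ≡ B d`, so `p³ e⁴ ≡ d² (p B²)`, and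
-- `p B² ≡ 0` by the previous identity.
lemma minor_dvd (hminors : f ^ 2 + b * d + c * p + e * q = 0)
    (hdet : p * (b * e - c * f) + q * (f * e + c * d) = 0) :
    e ^ 2 * p - (f * e + c * d) * d ∣ p ^ 3 * e ^ 4 :=
  ⟨p * (e ^ 2 * p + (f * e + c * d) * d) - (c * p + e * q) * d ^ 2, by
    linear_combination d ^ 2 * mul_sq_minor_eq hminors hdet⟩

end Matrix

section LeadingCoeff

variable {R : Type*} [Semiring R] {p : R[X]}

lemma leadingCoeff_ne_zero_of_natDegree_ne_zero (hp : p.natDegree ≠ 0) : p.leadingCoeff ≠ 0 :=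
  fun h => hp (by rw [Polynomial.leadingCoeff_eq_zero.1 h, Polynomial.natDegree_zero])

lemma derivative_eq_C_leadingCoeff (hp : p.natDegree = 1) :
    Polynomial.derivative p = Polynomial.C p.leadingCoeff := by
  conv_lhs => rw [Polynomial.eq_X_add_C_of_natDegree_le_one hp.le]
  simp [Polynomial.leadingCoeff, hp]

end LeadingCoeff

section CoeffwiseJacobian

variable {A R : Type*} [CommRing A] [CommRing R] [IsDomain R] [CharZero R] [Algebra A R]

lemma eq_zero_of_isNilpotent_of_natDegree_ne_zero {a b c d f : R[X]} {e p q : R}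
    (hM : IsNilpotent !![a, b, c; d, f, Polynomial.C e; Polynomial.C p, Polynomial.C q, 0])
    (he : e ≠ 0) (hp : p ≠ 0) (hc : c.natDegree ≠ 0) : d = 0 := by
  obtain ⟨hminors, hdet⟩ := minors_relations_of_isNilpotent hM
  have hdvd := minor_dvd hminors hdet
  have hsq := mul_sq_minor_eq hminors hdet
  simp only [← Polynomial.C_mul, ← Polynomial.C_pow] at hdvd hsq
  set B := f * Polynomial.C e + c * d
  set E := Polynomial.C (e ^ 2 * p) - B * d with hE
  set P := c * Polynomial.C p + Polynomial.C (e * q) with hP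
  have hconst : Polynomial.C (p ^ 3 * e ^ 4) ≠ 0 := by simp [he, hp]
  have hEdeg : E.natDegree = 0 := by
    simpa only [Polynomial.natDegree_C, Nat.le_zero]
      using Polynomial.natDegree_le_of_dvd hdvd hconst
  have hPdeg : P.natDegree = c.natDegree := by
    rw [hP, Polynomial.natDegree_add_C, Polynomial.natDegree_mul_C hp]
  have hBdeg : B.natDegree ≠ 0 := by
    have hP0 : P ≠ 0 := Polynomial.ne_zero_of_natDegree_gt (n := 0) (by lia)
    have hdeg := congrArg Polynomial.natDegree hsq
    rw [Polynomial.natDegree_C_mul hp, Polynomial.natDegree_pow, Polynomial.natDegree_neg,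
      Polynomial.natDegree_mul hP0 (ne_zero_of_dvd_ne_zero hconst hdvd)] at hdeg
    lia
  have hBd : (B * d).natDegree = 0 := by
    rwa [hE, ← Polynomial.natDegree_neg, neg_sub, Polynomial.natDegree_sub_C] at hEdeg
  by_contra hd
  rw [Polynomial.natDegree_mul (Polynomial.ne_zero_of_natDegree_gt (Nat.pos_of_ne_zero hBdeg)) hd]
    at hBd
  lia

variable (D : Derivation A R R) {u v a d : R[X]} {p q : R}

lemma natDegree_eq_three_of_sq_eq {r : R} (hu : 2 ≤ u.natDegree) {f : R[X]}
    (hf : f.natDegree ≤ 1) (hp : p ≠ 0)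
    (hsq : f ^ 2 = -(Polynomial.derivative u * Polynomial.C p + Polynomial.C r)) :
    u.natDegree = 3 ∧ f.coeff 1 ^ 2 = -(3 * u.leadingCoeff * p) := by
  have hdeg : u.natDegree = 3 := by
    have := congrArg Polynomial.natDegree hsq
    rw [Polynomial.natDegree_pow, Polynomial.natDegree_neg, Polynomial.natDegree_add_C,
      Polynomial.natDegree_mul_C hp, Polynomial.natDegree_derivative] at this
    lia
  refine ⟨hdeg, ?_⟩
  have hcoeff := congrArg (Polynomial.coeff · (2 * 1)) hsq
  simp only [Polynomial.coeff_pow_of_natDegree_le hf, Polynomial.coeff_neg, Polynomial.coeff_add,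
    Polynomial.coeff_mul_C, Polynomial.coeff_derivative, Polynomial.coeff_C_succ] at hcoeff
  rw [hcoeff, Polynomial.leadingCoeff, hdeg]
  push_cast
  ring

lemma natDegree_eq_two_of_mul_C_eq {e : R} (hu : 2 ≤ u.natDegree) {f : R[X]}
    (hf : f.natDegree ≤ 1) (he : e ≠ 0) (hd : d ≠ 0)
    (h : f * Polynomial.C e = -(Polynomial.derivative u * d)) :
    u.natDegree = 2 ∧ d.natDegree = 0 := by
  have hu0 : Polynomial.derivative u ≠ 0 := by
    rw [Ne, Polynomial.derivative_eq_zero]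
    lia
  have hdeg := congrArg Polynomial.natDegree h
  rw [Polynomial.natDegree_mul_C he, Polynomial.natDegree_neg, Polynomial.natDegree_mul hu0 hd,
    Polynomial.natDegree_derivative] at hdeg
  lia

lemma leadingCoeff_relations_of_ne_zero
    (hM : IsNilpotent !![a, coeffwise D u, Polynomial.derivative u;
      d, coeffwise D v, Polynomial.derivative v; Polynomial.C p, Polynomial.C q, 0])
    (hu : 2 ≤ u.natDegree) (hv : v.natDegree = 1) (hp : p ≠ 0) :
    D u.leadingCoeff * v.leadingCoeff = 3 * u.leadingCoeff * D v.leadingCoeff ∧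
      D v.leadingCoeff ^ 2 = -(3 * u.leadingCoeff * p) := by
  rw [derivative_eq_C_leadingCoeff hv] at hM
  obtain rfl : d = 0 := eq_zero_of_isNilpotent_of_natDegree_ne_zero hM
    (leadingCoeff_ne_zero_of_natDegree_ne_zero (by lia)) hp
    (by rw [Polynomial.natDegree_derivative]; lia)
  obtain ⟨hminors, hdet⟩ := minors_relations_of_isNilpotent hM
  have hDv : (coeffwise D v).natDegree ≤ 1 := (natDegree_coeffwise_le D v).trans hv.le
  obtain ⟨hdeg, hsq⟩ := natDegree_eq_three_of_sq_eq (r := v.leadingCoeff * q) hu hDv hp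
    (by rw [Polynomial.C_mul]; linear_combination hminors)
  have hDv1 : (coeffwise D v).coeff 1 = D v.leadingCoeff := by
    rw [coeff_coeffwise, Polynomial.leadingCoeff, hv]
  refine ⟨?_, hDv1 ▸ hsq⟩
  have hlead : u.coeff 3 = u.leadingCoeff := by rw [Polynomial.leadingCoeff, hdeg]
  have hDv3 : (coeffwise D v).coeff 3 = 0 := Polynomial.coeff_eq_zero_of_natDegree_lt (by lia)
  have hmul : (Polynomial.derivative u * coeffwise D v).coeff (2 + 1)
      = u.leadingCoeff * 3 * D v.leadingCoeff := by
    rw [Polynomial.coeff_mul_add_eq_of_natDegree_le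
      (by rw [Polynomial.natDegree_derivative, hdeg]) hDv, hDv1, Polynomial.coeff_derivative,
      hlead]
    norm_num
  have hcoeff := congrArg (Polynomial.coeff · 3) hdet
  simp only [mul_zero, add_zero, Polynomial.coeff_add, Polynomial.coeff_C_mul,
    Polynomial.coeff_sub, Polynomial.coeff_mul_C, coeff_coeffwise, hlead, hmul, hDv3, zero_mul,
    Polynomial.coeff_zero, mul_eq_zero, hp, false_or] at hcoeff
  linear_combination hcoeff

lemma leadingCoeff_relations_of_eq_zero
    (hM : IsNilpotent !![a, coeffwise D u, Polynomial.derivative u;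
      d, coeffwise D v, Polynomial.derivative v; 0, Polynomial.C q, 0])
    (hu : 2 ≤ u.natDegree) (hv : v.natDegree = 1) (hq : q ≠ 0) :
    D u.leadingCoeff * v.leadingCoeff = 2 * u.leadingCoeff * D v.leadingCoeff ∧
      ∃ w ≠ 0, D v.leadingCoeff * v.leadingCoeff = -(2 * u.leadingCoeff * w) := by
  have hv0 : v.leadingCoeff ≠ 0 := leadingCoeff_ne_zero_of_natDegree_ne_zero (by lia)
  have hDv : (coeffwise D v).natDegree ≤ 1 := (natDegree_coeffwise_le D v).trans hv.le
  have hDv1 : (coeffwise D v).coeff 1 = D v.leadingCoeff := by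
    rw [coeff_coeffwise, Polynomial.leadingCoeff, hv]
  rw [derivative_eq_C_leadingCoeff hv] at hM
  obtain ⟨hminors, hdet⟩ := minors_relations_of_isNilpotent hM
  have hminor : coeffwise D v * Polynomial.C v.leadingCoeff = -(Polynomial.derivative u * d) := by
    have hqC : Polynomial.C q ≠ 0 := by simpa using hq
    refine mul_left_cancel₀ hqC ?_
    linear_combination hdet
  have hd : d ≠ 0 := by
    rintro rfl
    have hDv0 : coeffwise D v = 0 := by simpa [hv0] using hminor
    simp [hDv0, hv0, hq] at hminors
  obtain ⟨hdeg, hdegd⟩ := natDegree_eq_two_of_mul_C_eq hu hDv hv0 hd hminor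
  obtain ⟨w, rfl⟩ := Polynomial.natDegree_eq_zero.1 hdegd
  have hw : w ≠ 0 := by simpa using hd
  have hlead : u.coeff 2 = u.leadingCoeff := by rw [Polynomial.leadingCoeff, hdeg]
  have hcoeff_one : D v.leadingCoeff * v.leadingCoeff = -(2 * u.leadingCoeff * w) := by
    have := congrArg (Polynomial.coeff · 1) hminor
    simp only [Polynomial.coeff_mul_C, Polynomial.coeff_neg, hDv1, Polynomial.coeff_derivative,
      hlead] at this
    push_cast at this
    linear_combination this
  have hcoeff_two : D v.leadingCoeff ^ 2 + D u.leadingCoeff * w = 0 := by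
    have := congrArg (Polynomial.coeff · (2 * 1)) hminors
    simpa only [Polynomial.coeff_add, Polynomial.coeff_pow_of_natDegree_le hDv, hDv1, mul_one,
      mul_zero, add_zero, ← Polynomial.C_mul, Polynomial.coeff_mul_C, coeff_coeffwise, hlead,
      Polynomial.coeff_zero, Polynomial.coeff_C_succ] using this
  refine ⟨mul_left_cancel₀ hw ?_, w, hw, hcoeff_one⟩
  linear_combination v.leadingCoeff * hcoeff_two - D v.leadingCoeff * hcoeff_one

end CoeffwiseJacobian

section Jacobian

variable {σ A : Type*} [CommRing A] [IsDomain A] [CharZero A]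

lemma eq_zero_of_isNilpotent_coeffwise_pderiv {i : σ}
    {u v a d : (MvPolynomial σ A)[X]} {p q : MvPolynomial σ A}
    (hM : IsNilpotent !![a, coeffwise (pderiv i) u, Polynomial.derivative u;
      d, coeffwise (pderiv i) v, Polynomial.derivative v; Polynomial.C p, Polynomial.C q, 0])
    (hu : 2 ≤ u.natDegree) (hv : v.natDegree = 1) : p = 0 ∧ q = 0 := by
  have hu0 : u.leadingCoeff ≠ 0 := leadingCoeff_ne_zero_of_natDegree_ne_zero (by lia)
  have hv0 : v.leadingCoeff ≠ 0 := leadingCoeff_ne_zero_of_natDegree_ne_zero (by lia)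
  have hp : p = 0 := by
    by_contra hp
    obtain ⟨hlog, hsq⟩ := leadingCoeff_relations_of_ne_zero _ hM hu hv hp
    have hdv : pderiv i v.leadingCoeff ≠ 0 := by
      intro h0
      simp [h0, hu0, hp] at hsq
    exact hdv <| pderiv_eq_zero_of_dvd_pderiv_mul (k := 3) (by norm_num) hu0 hv0 hdv
      (by simpa using hlog) ⟨-(3 * p), by linear_combination hsq⟩
      (by rw [degreeOf_pderiv]; lia)
  subst hp
  refine ⟨rfl, ?_⟩
  by_contra hq
  rw [Polynomial.C_0] at hM
  obtain ⟨hlog, w, hw, hmul⟩ := leadingCoeff_relations_of_eq_zero _ hM hu hv hq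
  have hdv : pderiv i v.leadingCoeff = 0 :=
    pderiv_eq_zero_of_dvd_pderiv_mul (k := 2) le_rfl hu0 hv0 hv0
      (by simpa using hlog) ⟨-(2 * w), by linear_combination hmul⟩ le_rfl
  simp [hdv, hu0, hw] at hmul

lemma pderiv_eq_zero_of_isNilpotent {x y z : σ} (hxz : x ≠ z) (hyz : y ≠ z)
    {u v h : MvPolynomial σ A} (hh : pderiv z h = 0) (hv : degreeOf z v = 1)
    (hu : 2 ≤ degreeOf z u)
    (hnil : IsNilpotent !![pderiv x u, pderiv y u, pderiv z u;
      pderiv x v, pderiv y v, pderiv z v; pderiv x h, pderiv y h, pderiv z h]) :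
    pderiv x h = 0 ∧ pderiv y h = 0 := by
  classical
  obtain ⟨r, hr⟩ : ∃ r, Polynomial.C r = splitVar z h := by
    rw [← Polynomial.natDegree_eq_zero, ← Polynomial.derivative_eq_zero, ← splitVar_pderiv_self,
      hh, map_zero]
  have hM := hnil.map (splitVar z).toRingEquiv.toRingHom.mapMatrix
  have hmap : ∀ {i : σ} (hi : i ≠ z),
      splitVar z (pderiv i h) = Polynomial.C (pderiv ⟨i, hi⟩ r) := fun hi => by
    rw [splitVar_pderiv_of_ne hi, ← hr, coeffwise_C]
  have hr0 := eq_zero_of_isNilpotent_coeffwise_pderiv (i := ⟨y, hyz⟩)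
    (u := splitVar z u) (v := splitVar z v) (a := splitVar z (pderiv x u))
    (d := splitVar z (pderiv x v)) (p := pderiv ⟨x, hxz⟩ r) (q := pderiv ⟨y, hyz⟩ r) ?_
    (by rwa [natDegree_splitVar]) (by rwa [natDegree_splitVar])
  · constructor <;> apply (splitVar z).injective
    · rw [hmap hxz, hr0.1, Polynomial.C_0, map_zero]
    · rw [hmap hyz, hr0.2, Polynomial.C_0, map_zero]
  · refine (congrArg IsNilpotent ?_).mp hM
    ext i j : 2
    fin_cases i <;> fin_cases j <;>
      simp [hmap, hxz, hyz, hh, splitVar_pderiv_of_ne, splitVar_pderiv_self]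

end Jacobian

theorem stmt_13_general {A : Type*} [CommRing A] [IsDomain A] [CharZero A]
    {u v h : MvPolynomial (Fin 3) A} (hh : pderiv 2 h = 0) (hv : degreeOf 2 v = 1)
    (hu : 2 ≤ degreeOf 2 u)
    (hnil : IsNilpotent (Matrix.of fun i j : Fin 3 => pderiv j (![u, v, h] i))) :
    h = C (constantCoeff h) := by
  rw [Matrix.eta_fin_three (Matrix.of _)] at hnil
  have hxy := pderiv_eq_zero_of_isNilpotent (x := 0) (y := 1) (by decide) (by decide) hh hv hu hnil
  exact eq_C_of_forall_pderiv_eq_zero <|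
    Fin.forall_fin_succ.2 ⟨hxy.1, Fin.forall_fin_two.2 ⟨hxy.2, hh⟩⟩

/-- Theorem 4.1: For `H = (u(x,y,z), v(x,y,z), h(x,y))` with `H(0) = 0`,
`deg_z v = 1`, `deg_z u ≥ 2`, and `JH` nilpotent, the polynomials `u, v, h` are linearly
dependent over `K`. -/
theorem stmt_13 (K : Type*) [Field K] [IsAlgClosed K] [CharZero K]
    (u v h : MvPolynomial (Fin 3) K)
    (hh : pderiv (2 : Fin 3) h = 0)
    (hdegv : MvPolynomial.degreeOf (2 : Fin 3) v = 1)
    (hdegu : 2 ≤ MvPolynomial.degreeOf (2 : Fin 3) u)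
    (hu0 : MvPolynomial.constantCoeff u = 0)
    (hv0 : MvPolynomial.constantCoeff v = 0)
    (hh0 : MvPolynomial.constantCoeff h = 0)
    (hnil : IsNilpotent (Matrix.of fun i j : Fin 3 => pderiv j (![u, v, h] i))) :
    ∃ l : Fin 3 → K, l ≠ 0 ∧
      MvPolynomial.C (l 0) * u + MvPolynomial.C (l 1) * v + MvPolynomial.C (l 2) * h = 0 := by
  have h0 : h = 0 := by rw [stmt_13_general hh hdegv hdegu hnil, hh0, C_0]
  exact ⟨![0, 0, 1], fun hl => one_ne_zero (congrFun hl 2), by simp [h0]⟩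
end
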